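/- Let n ≥ 2, A the Cartan matrix of type B_n, and ι an admissible sequence adapted to A. Then the type B boxes satisfy: (1) B^B_s(j+1) = B^B_s(j) − β_{s+P(j),j} for 1 ≤ j ≤ n−1 and s ≥ 1 − P(j); (2) B^B_s(n̄) = B^B_s(n) − β_{s+P(n),n} for s ≥ 1 − P(n); (3) B^B_s(ovl(j−1)) = B^B_s(j̄) − β_{s+P(j−1)+n−j+1, j−1} for 2 ≤ j ≤ n and s ≥ j − P(j−1) − n. -/

import Mathlib

noncomputable section

/-- The coordinate linear form `x_k` (as a coefficient vector). -/
def xc (k : ℕ) : ℕ → ℚ := fun l => if l = k then 1 else 0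

/-- Cartan matrix of type `A_n`. -/
def cartanA (_n : ℕ) (i j : ℕ) : ℤ :=
  if i = j then 2 else if i + 1 = j ∨ j + 1 = i then -1 else 0

/-- Cartan matrix of type `B_n`. -/
def cartanB (n : ℕ) (i j : ℕ) : ℤ :=
  if i = j then 2
  else if i = n ∧ j = n - 1 then -2
  else if i + 1 = j ∨ j + 1 = i then -1 else 0

/-- Cartan matrix of type `C_n`. -/
def cartanC (n : ℕ) (i j : ℕ) : ℤ :=
  if i = j then 2
  else if i = n - 1 ∧ j = n then -2
  else if i + 1 = j ∨ j + 1 = i then -1 else 0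

/-- Cartan matrix of type `D_n`. -/
def cartanD (n : ℕ) (i j : ℕ) : ℤ :=
  if i = j then 2
  else if (i = n - 1 ∧ j = n) ∨ (i = n ∧ j = n - 1) then 0
  else if (i + 1 = j ∨ j + 1 = i) ∨ (i = n ∧ j = n - 2) ∨ (i = n - 2 ∧ j = n) then -1
  else 0

/-- `ι` (with positions indexed by `k ≥ 1`) takes values in `{1,…,n}`, has no two equal
consecutive entries, and every index occurs infinitely often. -/
def Admissible (n : ℕ) (ι : ℕ → ℕ) : Prop :=
  (∀ k, 1 ≤ k → 1 ≤ ι k ∧ ι k ≤ n) ∧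
  (∀ k, 1 ≤ k → ι k ≠ ι (k + 1)) ∧
  (∀ i, 1 ≤ i → i ≤ n → ∀ N, ∃ k, N ≤ k ∧ ι k = i)

/-- `k^+`: the next position after `k` carrying the same letter. -/
def kplus (ι : ℕ → ℕ) (k : ℕ) : ℕ := sInf {l | k < l ∧ ι l = ι k}

/-- `k^-`: the previous position (`≥ 1`) carrying the same letter, `0` if none. -/
def kminus (ι : ℕ → ℕ) (k : ℕ) : ℕ := sSup {l | 0 < l ∧ l < k ∧ ι l = ι k}

/-- The linear form `β_k` (with `β_0 = 0`). -/
def beta (A : ℕ → ℕ → ℤ) (ι : ℕ → ℕ) (k : ℕ) : ℕ → ℚ :=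
  if k = 0 then 0
  else xc k + (∑ j ∈ Finset.Ioo k (kplus ι k), (A (ι k) (ι j) : ℚ) • xc j) + xc (kplus ι k)

/-- The piecewise-linear operator `S_k`. -/
def Sop (A : ℕ → ℕ → ℤ) (ι : ℕ → ℕ) (k : ℕ) (φ : ℕ → ℚ) : ℕ → ℚ :=
  if 0 < φ k then φ - φ k • beta A ι k
  else φ - φ k • beta A ι (kminus ι k)

/-- Membership in `Ξ_ι`: forms obtained from some `x_{j_0}` by finitely many operators `S_k`. -/
inductive XiMem (A : ℕ → ℕ → ℤ) (ι : ℕ → ℕ) : (ℕ → ℚ) → Prop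
  | base (k : ℕ) (hk : 1 ≤ k) : XiMem A ι (xc k)
  | step (k : ℕ) (hk : 1 ≤ k) (φ : ℕ → ℚ) (h : XiMem A ι φ) : XiMem A ι (Sop A ι k φ)

/-- The set `Ξ_ι`. -/
def Xi (A : ℕ → ℕ → ℤ) (ι : ℕ → ℕ) : Set (ℕ → ℚ) := { φ | XiMem A ι φ }

/-- Forms obtained from a set `g` of generators by finitely many operators `S_k`. -/
inductive XiMemFrom (A : ℕ → ℕ → ℤ) (ι : ℕ → ℕ) (g : Set (ℕ → ℚ)) : (ℕ → ℚ) → Prop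
  | base (φ : ℕ → ℚ) (h : φ ∈ g) : XiMemFrom A ι g φ
  | step (k : ℕ) (hk : 1 ≤ k) (φ : ℕ → ℚ) (h : XiMemFrom A ι g φ) :
      XiMemFrom A ι g (Sop A ι k φ)

/-- `ι` is adapted to the Cartan matrix `A`: for `i ≠ j` with `a_{i,j} ≠ 0`, consecutive
members of the subsequence of `ι` consisting of the letters `i`, `j` are distinct. -/
def Adapted (n : ℕ) (A : ℕ → ℕ → ℤ) (ι : ℕ → ℕ) : Prop :=
  ∀ i j, 1 ≤ i → i ≤ n → 1 ≤ j → j ≤ n → i ≠ j → A i j ≠ 0 →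
    ∀ k l, 1 ≤ k → k < l → (ι k = i ∨ ι k = j) → (ι l = i ∨ ι l = j) →
      (∀ m, k < m → m < l → ι m ≠ i ∧ ι m ≠ j) → ι k ≠ ι l

/-- Position of the first occurrence of the letter `i` in `ι`. -/
def firstOcc (ι : ℕ → ℕ) (i : ℕ) : ℕ := sInf {k | 1 ≤ k ∧ ι k = i}

/-- `p_{i,j} = 1` iff the first occurrence of `i` precedes the first occurrence of `j`. -/
def pval (ι : ℕ → ℕ) (i j : ℕ) : ℕ := if firstOcc ι i < firstOcc ι j then 1 else 0

/-- The function `P(k)` for types A, B, C (and `P(k) = 0` for `k > n`, `k ≤ 1`). -/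
def PABC (ι : ℕ → ℕ) (n k : ℕ) : ℕ :=
  if k ≤ n then ∑ t ∈ Finset.Icc 2 k, pval ι t (t - 1) else 0

/-- The function `P(k)` for type D. -/
def PD (ι : ℕ → ℕ) (n k : ℕ) : ℕ :=
  if k = n then (∑ t ∈ Finset.Icc 2 (n - 2), pval ι t (t - 1)) + pval ι n (n - 2)
  else if k ≤ n then ∑ t ∈ Finset.Icc 2 k, pval ι t (t - 1) else 0

/-- `occPos ι j s`: the position of the `s`-th occurrence of the letter `j` in `ι`
(`0` for `s = 0`). -/
def occPos (ι : ℕ → ℕ) (j : ℕ) : ℕ → ℕ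
  | 0 => 0
  | s + 1 => sInf {k | occPos ι j s < k ∧ ι k = j}

/-- The double-indexed coordinate form `x_{s,j}`, with the conventions
`x_{s,0} = x_{s,n+1} = 0` and `x_{s,j} = 0` for `s ≤ 0`. -/
def xsj (ι : ℕ → ℕ) (n : ℕ) (s : ℤ) (j : ℕ) : ℕ → ℚ :=
  if 1 ≤ s ∧ 1 ≤ j ∧ j ≤ n then xc (occPos ι j s.toNat) else 0

/-- The double-indexed form `β_{s,j}`. -/
def betasj (A : ℕ → ℕ → ℤ) (ι : ℕ → ℕ) (s : ℤ) (j : ℕ) : ℕ → ℚ :=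
  beta A ι (occPos ι j s.toNat)

/-- The double-indexed operator `S_{m,j}`. -/
def Ssj (A : ℕ → ℕ → ℤ) (ι : ℕ → ℕ) (m j : ℕ) (φ : ℕ → ℚ) : ℕ → ℚ :=
  Sop A ι (occPos ι j m) φ

/- Entries of the ordered sets `J_X` are encoded as natural numbers:
an unbarred entry `j ∈ {1,…,n}` is encoded as `j`, a barred entry `j̄` is
encoded as `2n+1-j` (so that `n̄ = n+1, …, 1̄ = 2n` and the total order of
`J_B = J_C` is the numerical order), and the extra symbol `ovl(n+1)` of
types C and D is encoded as `0`. -/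

/-- The box of type A. -/
def boxA (ι : ℕ → ℕ) (n : ℕ) (s : ℤ) (j : ℕ) : ℕ → ℚ :=
  xsj ι n (s + (PABC ι n j : ℤ)) j - xsj ι n (s + (PABC ι n (j - 1) : ℤ) + 1) (j - 1)

/-- The box of type B. -/
def boxB (ι : ℕ → ℕ) (n : ℕ) (s : ℤ) (e : ℕ) : ℕ → ℚ :=
  if e ≤ n then
    xsj ι n (s + (PABC ι n e : ℤ)) e - xsj ι n (s + (PABC ι n (e - 1) : ℤ) + 1) (e - 1)
  else
    xsj ι n (s + (PABC ι n (2 * n - e) : ℤ) + (n : ℤ) - ((2 * n + 1 - e : ℕ) : ℤ) + 1)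
        (2 * n - e)
      - xsj ι n (s + (PABC ι n (2 * n + 1 - e) : ℤ) + (n : ℤ) - ((2 * n + 1 - e : ℕ) : ℤ) + 1)
          (2 * n + 1 - e)

/-- The box of type C (`ovl(n+1)` encoded as `0`). -/
def boxC (ι : ℕ → ℕ) (n : ℕ) (s : ℤ) (e : ℕ) : ℕ → ℚ :=
  if e = 0 then xsj ι n (s + (PABC ι n n : ℤ)) n
  else if e < n then
    xsj ι n (s + (PABC ι n e : ℤ)) e - xsj ι n (s + (PABC ι n (e - 1) : ℤ) + 1) (e - 1)
  else if e = n then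
    (2 : ℚ) • xsj ι n (s + (PABC ι n n : ℤ)) n
      - xsj ι n (s + (PABC ι n (n - 1) : ℤ) + 1) (n - 1)
  else if e = n + 1 then
    xsj ι n (s + (PABC ι n (n - 1) : ℤ) + 1) (n - 1)
      - (2 : ℚ) • xsj ι n (s + (PABC ι n n : ℤ) + 1) n
  else
    xsj ι n (s + (PABC ι n (2 * n - e) : ℤ) + (n : ℤ) - ((2 * n + 1 - e : ℕ) : ℤ) + 1)
        (2 * n - e)
      - xsj ι n (s + (PABC ι n (2 * n + 1 - e) : ℤ) + (n : ℤ) - ((2 * n + 1 - e : ℕ) : ℤ) + 1)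
          (2 * n + 1 - e)

/-- The box of type D (`ovl(n+1)` encoded as `0`, `n̄` as `n+1`, `ovl(n-1)` as `n+2`). -/
def boxD (ι : ℕ → ℕ) (n : ℕ) (s : ℤ) (e : ℕ) : ℕ → ℚ :=
  if e = 0 then xsj ι n (s + (PD ι n n : ℤ)) n
  else if e ≤ n - 2 then
    xsj ι n (s + (PD ι n e : ℤ)) e - xsj ι n (s + (PD ι n (e - 1) : ℤ) + 1) (e - 1)
  else if e = n - 1 then
    xsj ι n (s + (PD ι n (n - 1) : ℤ)) (n - 1) + xsj ι n (s + (PD ι n n : ℤ)) n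
      - xsj ι n (s + (PD ι n (n - 2) : ℤ) + 1) (n - 2)
  else if e = n then
    xsj ι n (s + (PD ι n n : ℤ)) n - xsj ι n (s + (PD ι n (n - 1) : ℤ) + 1) (n - 1)
  else if e = n + 1 then
    xsj ι n (s + (PD ι n (n - 1) : ℤ)) (n - 1) - xsj ι n (s + (PD ι n n : ℤ) + 1) n
  else if e = n + 2 then
    xsj ι n (s + (PD ι n (n - 2) : ℤ) + 1) (n - 2)
      - xsj ι n (s + (PD ι n (n - 1) : ℤ) + 1) (n - 1)
      - xsj ι n (s + (PD ι n n : ℤ) + 1) n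
  else
    xsj ι n (s + (PD ι n (2 * n - e) : ℤ) + (n : ℤ) - ((2 * n + 1 - e : ℕ) : ℤ)) (2 * n - e)
      - xsj ι n (s + (PD ι n (2 * n + 1 - e) : ℤ) + (n : ℤ) - ((2 * n + 1 - e : ℕ) : ℤ))
          (2 * n + 1 - e)

/-- The column tableau `[j_1,…,j_k]_s = Σ_{i=1}^k box_{s+k-i}(j_i)`. -/
def tab (box : ℤ → ℕ → ℕ → ℚ) (s : ℤ) (k : ℕ) (j : ℕ → ℕ) : ℕ → ℚ :=
  ∑ i ∈ Finset.Icc 1 k, box (s + (k : ℤ) - (i : ℤ)) (j i)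

/-- The set `Tab_{A,ι}`. -/
def TabA (ι : ℕ → ℕ) (n : ℕ) : Set (ℕ → ℚ) :=
  { T | ∃ (k : ℕ) (s : ℤ) (j : ℕ → ℕ),
      1 ≤ k ∧ k ≤ n ∧
      (∀ i, 1 ≤ i → i ≤ k → 1 ≤ j i ∧ j i ≤ n + 1) ∧
      (∀ i, 1 ≤ i → i < k → j i < j (i + 1)) ∧
      1 - (PABC ι n k : ℤ) ≤ s ∧
      T = tab (boxA ι n) s k j }

/-- `|·|` on encoded entries of `J_B = J_C`. -/
def absJ (n e : ℕ) : ℕ := if e ≤ n then e else 2 * n + 1 - e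

/-- The set `Tab_{B,ι}`. -/
def TabB (ι : ℕ → ℕ) (n : ℕ) : Set (ℕ → ℚ) :=
  { T | ∃ (k : ℕ) (s : ℤ) (j : ℕ → ℕ),
      1 ≤ k ∧ k ≤ n ∧
      (∀ i, 1 ≤ i → i ≤ k → 1 ≤ j i ∧ j i ≤ 2 * n) ∧
      (∀ i, 1 ≤ i → i < k → j i < j (i + 1)) ∧
      (k = n → ∀ l m, 1 ≤ l → l < m → m ≤ k → absJ n (j l) ≠ absJ n (j m)) ∧
      1 - (PABC ι n k : ℤ) ≤ s ∧
      T = tab (boxB ι n) s k j }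

/-- Defining conditions of `Tab_{C,ι}` on the data `(k,s,j)`. -/
def TabCcond (ι : ℕ → ℕ) (n : ℕ) (k : ℕ) (s : ℤ) (j : ℕ → ℕ) : Prop :=
  (1 ≤ k ∧ k ≤ n - 1 ∧
    (∀ i, 1 ≤ i → i ≤ k → 1 ≤ j i ∧ j i ≤ 2 * n) ∧
    (∀ i, 1 ≤ i → i < k → j i < j (i + 1)) ∧
    1 - (PABC ι n k : ℤ) ≤ s)
  ∨
  (j 1 = 0 ∧ 1 ≤ k ∧ k ≤ n + 1 ∧
    (∀ i, 2 ≤ i → i ≤ k → n + 1 ≤ j i ∧ j i ≤ 2 * n) ∧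
    (∀ i, 2 ≤ i → i < k → j i < j (i + 1)) ∧
    1 - (PABC ι n n : ℤ) ≤ s)

/-- The set `Tab_{C,ι}`. -/
def TabC (ι : ℕ → ℕ) (n : ℕ) : Set (ℕ → ℚ) :=
  { T | ∃ k s j, TabCcond ι n k s j ∧ T = tab (boxC ι n) s k j }

/-- The partial order on (encoded) `J_D`: `a ≤ b` iff `a = b`, or `a < b` numerically and
`(a,b)` is not the incomparable pair `(n, n̄)`. -/
def leD (n a b : ℕ) : Prop := a = b ∨ (a < b ∧ ¬(a = n ∧ b = n + 1))

/-- Defining conditions of `Tab_{D,ι}` on the data `(k,s,j)`. -/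
def TabDcond (ι : ℕ → ℕ) (n : ℕ) (k : ℕ) (s : ℤ) (j : ℕ → ℕ) : Prop :=
  (1 ≤ k ∧ k ≤ n - 2 ∧
    (∀ i, 1 ≤ i → i ≤ k → 1 ≤ j i ∧ j i ≤ 2 * n) ∧
    (∀ i, 1 ≤ i → i < k → ¬ leD n (j (i + 1)) (j i)) ∧
    1 - (PD ι n k : ℤ) ≤ s)
  ∨
  (j 1 = 0 ∧ 1 ≤ k ∧ k ≤ n + 1 ∧
    (∀ i, 2 ≤ i → i ≤ k → n + 1 ≤ j i ∧ j i ≤ 2 * n) ∧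
    (∀ i, 2 ≤ i → i < k → j i < j (i + 1)) ∧
    (k % 2 = 0 → 1 - (PD ι n (n - 1) : ℤ) ≤ s) ∧
    (k % 2 = 1 → 1 - (PD ι n n : ℤ) ≤ s))

/-- The set `Tab_{D,ι}`. -/
def TabD (ι : ℕ → ℕ) (n : ℕ) : Set (ℕ → ℚ) :=
  { T | ∃ k s j, TabDcond ι n k s j ∧ T = tab (boxD ι n) s k j }

end

theorem occ_spec {n : ℕ} {ι : ℕ → ℕ} (hadm : Admissible n ι) {j : ℕ} (h1 : 1 ≤ j) (hj : j ≤ n)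
    (s : ℕ) : occPos ι j s < occPos ι j (s + 1) ∧ ι (occPos ι j (s + 1)) = j := by
  have hne : {k | occPos ι j s < k ∧ ι k = j}.Nonempty := by
    obtain ⟨k, hk, hk'⟩ := hadm.2.2 j h1 hj (occPos ι j s + 1)
    exact ⟨k, hk, hk'⟩
  exact Nat.sInf_mem hne

theorem occ_min {ι : ℕ → ℕ} {j s t : ℕ} (h : occPos ι j s < t) (ht : ι t = j) :
    occPos ι j (s + 1) ≤ t := Nat.sInf_le ⟨h, ht⟩

/-- Alternation of two letters. -/
def Alt (ι : ℕ → ℕ) (i j : ℕ) : Prop :=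
  ∀ k l, 1 ≤ k → k < l → (ι k = i ∨ ι k = j) → (ι l = i ∨ ι l = j) →
      (∀ m, k < m → m < l → ι m ≠ i ∧ ι m ≠ j) → ι k ≠ ι l

theorem Alt.symm' {ι : ℕ → ℕ} {i j : ℕ} (h : Alt ι i j) : Alt ι j i := by
  intro k l h1 h2 h3 h4 h5
  exact h k l h1 h2 h3.symm h4.symm (fun m a b => (h5 m a b).symm)

theorem occ_between {n : ℕ} {ι : ℕ → ℕ} (hadm : Admissible n ι) {i j : ℕ}
    (h1 : 1 ≤ j) (hj : j ≤ n) (ha : Alt ι i j) (s : ℕ) :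
    ∃ r, occPos ι j (s + 1) < r ∧ r < occPos ι j (s + 2) ∧ ι r = i := by
  by_contra! hcon
  have a := occ_spec hadm h1 hj s
  have b := occ_spec hadm h1 hj (s + 1)
  refine ha (occPos ι j (s + 1)) (occPos ι j (s + 2)) (by omega) b.1 (Or.inr a.2) (Or.inr b.2) ?_
    (a.2.trans b.2.symm)
  intro m hm1 hm2
  refine ⟨hcon m hm1 hm2, fun hm => ?_⟩
  have := occ_min hm1 hm
  have e : s + 1 + 1 = s + 2 := rfl
  rw [e] at this
  omega

theorem interleave {n : ℕ} {ι : ℕ → ℕ} (hadm : Admissible n ι) {i j : ℕ}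
    (h1 : 1 ≤ j) (hj : j ≤ n) (hi1 : 1 ≤ i) (hi : i ≤ n) (ha : Alt ι i j)
    (hf : firstOcc ι i < firstOcc ι j) (s : ℕ) :
    occPos ι j s < occPos ι i (s + 1) ∧ occPos ι i (s + 1) < occPos ι j (s + 1) := by
  induction s with
  | zero => exact ⟨(occ_spec hadm hi1 hi 0).1, hf⟩
  | succ s ih =>
    obtain ⟨r, hr1, hr2, hr3⟩ := occ_between hadm hi1 hi ha.symm' s
    have hA := occ_min (lt_trans ih.1 hr1) hr3
    have hB : occPos ι j (s + 1) < occPos ι i (s + 1 + 1) := lt_of_le_of_lt hA hr2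
    obtain ⟨r, hr1, hr2, hr3⟩ := occ_between hadm h1 hj ha s
    have hC := occ_min (lt_trans ih.2 hr1) hr3
    exact ⟨hB, lt_of_le_of_lt hC hr2⟩

theorem filter_first {n : ℕ} {ι : ℕ → ℕ} (hadm : Admissible n ι) {i j : ℕ}
    (h1 : 1 ≤ j) (hj : j ≤ n) (hi1 : 1 ≤ i) (hi : i ≤ n) (ha : Alt ι i j)
    (hf : firstOcc ι i < firstOcc ι j) (m : ℕ) :
    (Finset.Ioo (occPos ι j (m + 1)) (occPos ι j (m + 2))).filter (fun t => ι t = i)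
      = {occPos ι i (m + 2)} := by
  have I := interleave hadm h1 hj hi1 hi ha hf
  have A := I m
  have B : _ ∧ occPos ι i (m + 2) < occPos ι j (m + 2) := I (m + 1)
  have C : occPos ι j (m + 2) < occPos ι i (m + 2 + 1) ∧ _ := I (m + 2)
  have hs : _ ∧ ι (occPos ι i (m + 2)) = i := occ_spec hadm hi1 hi (m + 1)
  ext t
  simp only [Finset.mem_filter, Finset.mem_Ioo, Finset.mem_singleton]
  constructor
  · rintro ⟨⟨p, q⟩, r⟩
    have u : occPos ι i (m + 2) ≤ t := occ_min (lt_trans A.2 p) r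
    by_contra hne
    have v := occ_min (lt_of_le_of_ne u (Ne.symm hne)) r
    omega
  · rintro rfl
    exact ⟨⟨B.1, B.2⟩, hs.2⟩

theorem filter_second {n : ℕ} {ι : ℕ → ℕ} (hadm : Admissible n ι) {i j : ℕ}
    (h1 : 1 ≤ j) (hj : j ≤ n) (hi1 : 1 ≤ i) (hi : i ≤ n) (ha : Alt ι i j)
    (hf : firstOcc ι j < firstOcc ι i) (m : ℕ) :
    (Finset.Ioo (occPos ι j (m + 1)) (occPos ι j (m + 2))).filter (fun t => ι t = i)
      = {occPos ι i (m + 1)} := by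
  have I := interleave hadm hi1 hi h1 hj ha.symm' hf
  have A := I m
  have B : occPos ι i (m + 1) < occPos ι j (m + 2) ∧ occPos ι j (m + 2) < occPos ι i (m + 2) :=
    I (m + 1)
  have hs := occ_spec hadm hi1 hi m
  ext t
  simp only [Finset.mem_filter, Finset.mem_Ioo, Finset.mem_singleton]
  constructor
  · rintro ⟨⟨p, q⟩, r⟩
    have u : occPos ι i (m + 1) ≤ t := occ_min (lt_trans A.1 p) r
    by_contra hne
    have v : occPos ι i (m + 2) ≤ t := occ_min (lt_of_le_of_ne u (Ne.symm hne)) r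
    omega
  · rintro rfl
    exact ⟨⟨A.2, B.1⟩, hs.2⟩

theorem firstOcc_ne {n : ℕ} {ι : ℕ → ℕ} (hadm : Admissible n ι) {i j : ℕ}
    (h1 : 1 ≤ j) (hj : j ≤ n) (hi1 : 1 ≤ i) (hi : i ≤ n) (hij : i ≠ j) :
    firstOcc ι i ≠ firstOcc ι j := by
  intro h
  have a : ι (firstOcc ι i) = i := (occ_spec hadm hi1 hi 0).2
  have b : ι (firstOcc ι j) = j := (occ_spec hadm h1 hj 0).2
  rw [h, b] at a
  exact hij a.symm

theorem sum_lower {n : ℕ} {ι : ℕ → ℕ} (hadm : Admissible n ι) {i j : ℕ}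
    (h1 : 1 ≤ j) (hj : j ≤ n) (hi1 : 1 ≤ i) (hi : i ≤ n) (hij : i ≠ j) (ha : Alt ι i j) (m : ℕ) :
    ∑ t ∈ (Finset.Ioo (occPos ι j (m + 1)) (occPos ι j (m + 2))).filter (fun t => ι t = i), xc t
      = xsj ι n ((m : ℤ) + 2 - pval ι j i) i ∧
    ∑ t ∈ (Finset.Ioo (occPos ι j (m + 1)) (occPos ι j (m + 2))).filter (fun t => ι t = i), xc t
      = xsj ι n ((m : ℤ) + 1 + pval ι i j) i := by
  rcases lt_or_gt_of_ne (firstOcc_ne hadm h1 hj hi1 hi hij) with h | h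
  · rw [filter_first hadm h1 hj hi1 hi ha h m, Finset.sum_singleton]
    have p1 : pval ι j i = 0 := by simp [pval, h.le]
    have p2 : pval ι i j = 1 := by simp [pval, h]
    have e1 : ((m : ℤ) + 2 - (0 : ℕ)).toNat = m + 2 := by omega
    have e2 : ((m : ℤ) + 1 + (1 : ℕ)).toNat = m + 2 := by omega
    rw [p1, p2]
    constructor
    · rw [xsj, if_pos ⟨by omega, hi1, hi⟩, e1]
    · rw [xsj, if_pos ⟨by omega, hi1, hi⟩, e2]
  · rw [filter_second hadm h1 hj hi1 hi ha h m, Finset.sum_singleton]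
    have p1 : pval ι j i = 1 := by simp [pval, h]
    have p2 : pval ι i j = 0 := by simp [pval, h.le]
    have e1 : ((m : ℤ) + 2 - (1 : ℕ)).toNat = m + 1 := by omega
    have e2 : ((m : ℤ) + 1 + (0 : ℕ)).toNat = m + 1 := by omega
    rw [p1, p2]
    constructor
    · rw [xsj, if_pos ⟨by omega, hi1, hi⟩, e1]
    · rw [xsj, if_pos ⟨by omega, hi1, hi⟩, e2]

theorem PABC_succ (ι : ℕ → ℕ) {n k : ℕ} (h1 : 1 ≤ k) (hk : k + 1 ≤ n) :
    PABC ι n (k + 1) = PABC ι n k + pval ι (k + 1) k := by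
  rw [PABC, PABC, if_pos hk, if_pos (by omega), Finset.sum_Icc_succ_top (by omega)]
  rfl

theorem cartanB_ne {n i j : ℕ} (h : i + 1 = j ∨ j + 1 = i) : cartanB n i j ≠ 0 := by
  unfold cartanB
  split_ifs <;> simp

theorem sum_out {n : ℕ} {ι : ℕ → ℕ} (hadm : Admissible n ι) {i : ℕ}
    (hi : ¬ (1 ≤ i ∧ i ≤ n)) (a b : ℕ) (z : ℤ) :
    ∑ t ∈ (Finset.Ioo a b).filter (fun t => ι t = i), xc t = xsj ι n z i := by
  rw [xsj, if_neg (by tauto)]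
  apply Finset.sum_eq_zero
  intro t ht
  simp only [Finset.mem_filter, Finset.mem_Ioo] at ht
  have := hadm.1 t (by omega)
  rw [ht.2] at this
  exact absurd this hi

theorem beta_formula (n : ℕ) (ι : ℕ → ℕ)
    (hadm : Admissible n ι) (hadap : Adapted n (cartanB n) ι) (j : ℕ) (s : ℤ)
    (h1 : 1 ≤ j) (hj : j ≤ n) (hs : 1 ≤ s + (PABC ι n j : ℤ)) :
    betasj (cartanB n) ι (s + (PABC ι n j : ℤ)) j =
      xsj ι n (s + (PABC ι n j : ℤ)) j
      + (cartanB n j (j - 1) : ℚ) • xsj ι n (s + (PABC ι n (j - 1) : ℤ) + 1) (j - 1)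
      + (cartanB n j (j + 1) : ℚ) • xsj ι n (s + (PABC ι n (j + 1) : ℤ)) (j + 1)
      + xsj ι n (s + (PABC ι n j : ℤ) + 1) j := by
  obtain ⟨m, hm⟩ : ∃ m : ℕ, s + (PABC ι n j : ℤ) = m + 1 :=
    ⟨(s + (PABC ι n j : ℤ) - 1).toNat, by omega⟩
  have e1 : ((m : ℤ) + 1).toNat = m + 1 := by omega
  have e2 : ((m : ℤ) + 1 + 1).toNat = m + 2 := by omega
  have sp := occ_spec hadm h1 hj m
  have L : ∑ t ∈ (Finset.Ioo (occPos ι j (m + 1)) (occPos ι j (m + 2))).filter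
      (fun t => ι t = j - 1), xc t = xsj ι n (s + (PABC ι n (j - 1) : ℤ) + 1) (j - 1) := by
    by_cases h : 1 ≤ j - 1
    · have ha : Alt ι (j - 1) j := hadap (j - 1) j h (by omega) h1 hj (by omega)
        (cartanB_ne (by omega))
      rw [(sum_lower hadm h1 hj h (by omega) (by omega) ha m).1]
      have hP := PABC_succ ι (n := n) h (by omega)
      rw [Nat.sub_add_cancel h1] at hP
      congr 1
      omega
    · exact sum_out hadm (by tauto) _ _ _
  have U : ∑ t ∈ (Finset.Ioo (occPos ι j (m + 1)) (occPos ι j (m + 2))).filter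
      (fun t => ι t = j + 1), xc t = xsj ι n (s + (PABC ι n (j + 1) : ℤ)) (j + 1) := by
    by_cases h : j + 1 ≤ n
    · have ha : Alt ι (j + 1) j := hadap (j + 1) j (by omega) h h1 hj (by omega)
        (cartanB_ne (by omega))
      rw [(sum_lower hadm h1 hj (by omega) h (by omega) ha m).2]
      have hP := PABC_succ ι (n := n) h1 h
      congr 1
      omega
    · exact sum_out hadm (by tauto) _ _ _
  rw [← L, ← U, hm, betasj, e1, beta, if_neg (by omega)]
  have kp : kplus ι (occPos ι j (m + 1)) = occPos ι j (m + 2) := by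
    rw [kplus, sp.2]
    rfl
  rw [kp, sp.2, xsj, xsj, if_pos ⟨by omega, h1, hj⟩, if_pos ⟨by omega, h1, hj⟩, e1, e2]
  congr 1
  rw [add_assoc]
  congr 1
  rw [Finset.smul_sum, Finset.smul_sum, Finset.sum_filter, Finset.sum_filter,
    ← Finset.sum_add_distrib]
  apply Finset.sum_congr rfl
  intro t ht
  rw [Finset.mem_Ioo] at ht
  have hne : ι t ≠ j := by
    intro h
    have := occ_min ht.1 h
    have e : m + 1 + 1 = m + 2 := rfl
    rw [e] at this
    omega
  by_cases ha : ι t = j - 1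
  · rw [if_pos ha, if_neg (by omega), ha, add_zero]
  · by_cases hb : ι t = j + 1
    · rw [if_neg ha, if_pos hb, hb, zero_add]
    · rw [if_neg ha, if_neg hb, cartanB, if_neg (by omega), if_neg (by omega), if_neg (by omega)]
      simp

theorem cart_up {n j : ℕ} (hj : 1 ≤ j) : cartanB n j (j + 1) = -1 := by
  rw [cartanB, if_neg (by omega), if_neg (by omega), if_pos (by omega)]

theorem cart_down {n j : ℕ} (h1 : 1 ≤ j) (hj : j + 1 ≤ n) : cartanB n j (j - 1) = -1 := by
  rw [cartanB, if_neg (by omega), if_neg (by omega), if_pos (by omega)]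

/-- Lemma 3.3 (ii): the type B box relations (barred entries `j̄` are encoded as `2n+1-j`). -/
theorem boxB_rel (n : ℕ) (hn : 2 ≤ n) (ι : ℕ → ℕ)
    (hadm : Admissible n ι) (hadap : Adapted n (cartanB n) ι) :
    (∀ (j : ℕ) (s : ℤ), 1 ≤ j → j ≤ n - 1 → 1 - (PABC ι n j : ℤ) ≤ s →
      boxB ι n s (j + 1) =
        boxB ι n s j - betasj (cartanB n) ι (s + (PABC ι n j : ℤ)) j) ∧
    (∀ s : ℤ, 1 - (PABC ι n n : ℤ) ≤ s →
      boxB ι n s (n + 1) =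
        boxB ι n s n - betasj (cartanB n) ι (s + (PABC ι n n : ℤ)) n) ∧
    (∀ (j : ℕ) (s : ℤ), 2 ≤ j → j ≤ n → (j : ℤ) - (PABC ι n (j - 1) : ℤ) - (n : ℤ) ≤ s →
      boxB ι n s (2 * n + 2 - j) =
        boxB ι n s (2 * n + 1 - j)
          - betasj (cartanB n) ι
              (s + (PABC ι n (j - 1) : ℤ) + (n : ℤ) - (j : ℤ) + 1) (j - 1)) := by
  refine ⟨?_, ?_, ?_⟩
  · intro j s h1 hj hs
    rw [beta_formula n ι hadm hadap j s h1 (by omega) (by omega), cart_up h1,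
      cart_down h1 (by omega), boxB, boxB, if_pos (by omega), if_pos (by omega),
      Nat.add_sub_cancel]
    push_cast
    module
  · intro s hs
    have c : cartanB n n (n - 1) = -2 := by
      rw [cartanB, if_neg (by omega), if_pos ⟨rfl, rfl⟩]
    have z : xsj ι n (s + (PABC ι n (n + 1) : ℤ)) (n + 1) = 0 := by
      rw [xsj, if_neg (by omega)]
    have a1 : 2 * n - (n + 1) = n - 1 := by omega
    have a2 : 2 * n + 1 - (n + 1) = n := by omega
    rw [beta_formula n ι hadm hadap n s (by omega) le_rfl (by omega), z, c, boxB, boxB,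
      if_neg (by omega), if_pos le_rfl, a1, a2, add_sub_cancel_right, add_sub_cancel_right]
    push_cast
    module
  · intro j s h2 hj hs
    obtain ⟨i, rfl⟩ : ∃ i, j = i + 1 := ⟨j - 1, by omega⟩
    rw [Nat.add_sub_cancel] at hs ⊢
    push_cast at hs
    have a1 : 2 * n - (2 * n + 2 - (i + 1)) = i - 1 := by omega
    have a2 : 2 * n + 1 - (2 * n + 2 - (i + 1)) = i := by omega
    have a3 : 2 * n - (2 * n + 1 - (i + 1)) = i := by omega
    have a4 : 2 * n + 1 - (2 * n + 1 - (i + 1)) = i + 1 := by omega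
    have key := beta_formula n ι hadm hadap i (s + n - i) (by omega) (by omega) (by omega)
    rw [cart_up (by omega), cart_down (by omega) (by omega)] at key
    have b1 : s + (PABC ι n i : ℤ) + (n : ℤ) - ((i + 1 : ℕ) : ℤ) + 1
        = s + n - i + (PABC ι n i : ℤ) := by push_cast; ring
    have b2 : s + (PABC ι n (i - 1) : ℤ) + (n : ℤ) - (i : ℤ) + 1
        = s + n - i + (PABC ι n (i - 1) : ℤ) + 1 := by ring
    have b3 : s + (PABC ι n i : ℤ) + (n : ℤ) - (i : ℤ) + 1
        = s + n - i + (PABC ι n i : ℤ) + 1 := by ring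
    have b4 : s + (PABC ι n (i + 1) : ℤ) + (n : ℤ) - ((i + 1 : ℕ) : ℤ) + 1
        = s + n - i + (PABC ι n (i + 1) : ℤ) := by push_cast; ring
    rw [boxB, boxB, if_neg (by omega), if_neg (by omega), a1, a2, a3, a4, b1, b2, b3, b4, key]
    push_cast
    module
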